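/- arXiv:2009.10240 — 4 statements merged into one kernel-verified Lean document; each statement's English description precedes it below -/
import Mathlib

section
/- Let P be a normal program over a set A of propositional atoms and let (P_b, P_t) be a splitting of P. If I_b ⊆ A is an answer set of P_b and J ⊆ A is an answer set of the program P_t ∪ I_b, then J is an answer set of P. -/
/-- A rule of a normal logic program: a head (`none` represents `⊥`, i.e. a
constraint), a finite set of positive body atoms and a finite set of negated
body atoms.  The type `α` is the set of propositional atoms. -/
structure NRule (α : Type*) where
  head : Option α
  pos : Finset α
  neg : Finset α

namespace NRule

/-- The atoms occurring (in the head or in the body) of a rule. -/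
def atoms {α : Type*} (r : NRule α) : Set α :=
  {a | r.head = some a} ∪ ↑r.pos ∪ ↑r.neg

end NRule

/-- A normal program is a set of rules. -/
abbrev NProgram (α : Type*) := Set (NRule α)

/-- A rule survives into (and is kept, with its negative body removed, in) the
reduct `P^I` iff its negated body is disjoint from `I`. -/
def InReduct {α : Type*} (I : Set α) (r : NRule α) : Prop :=
  ∀ a ∈ r.neg, a ∉ I

/-- `J` is closed under the (positive parts of the) atom-headed rules of the
reduct `P^I`: whenever such a rule has its positive body inside `J`, its head
atom is in `J`. -/
def ClosedUnder {α : Type*} (P : NProgram α) (I J : Set α) : Prop :=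
  ∀ r ∈ P, InReduct I r → ∀ a : α, r.head = some a → ↑r.pos ⊆ J → a ∈ J

/-- `I` is an answer set of `P`: (i) `I` is the least set closed under the
atom-headed rules of the reduct `P^I`, and (ii) no `⊥`-headed rule of the
reduct `P^I` has its positive body inside `I`. -/
def IsAnswerSet {α : Type*} (P : NProgram α) (I : Set α) : Prop :=
  (ClosedUnder P I I ∧ ∀ J : Set α, ClosedUnder P I J → I ⊆ J) ∧
    ¬ ∃ r ∈ P, InReduct I r ∧ r.head = none ∧ ↑r.pos ⊆ I

/-- A set `S` of atoms identified with the set of facts `{a ← . : a ∈ S}`. -/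
def facts {α : Type*} (S : Set α) : NProgram α :=
  {r | ∃ a ∈ S, r = ⟨some a, ∅, ∅⟩}

/-- `(Pb, Pt)` is a splitting (of `Pb ∪ Pt`): no atom occurring in `Pb` is the
head of a rule of `Pt`. -/
def IsSplitting {α : Type*} (Pb Pt : NProgram α) : Prop :=
  ∀ a : α, (∃ r ∈ Pb, a ∈ r.atoms) → ¬ ∃ r ∈ Pt, r.head = some a

/-!
Every atom of an answer set is the head of some rule. Hence an answer set `J` of `Pt ∪ facts Ib`
agrees with `Ib` on all atoms that are not heads of rules of `Pt`, in particular on the bodies of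
`Pb`. So `Pb` has the same reduct with respect to `J` and `Ib`, its rules fire in `J` exactly when
they fire in `Ib`, and every set closed under the reduct of `Pb` by `J` contains `Ib`.
-/

namespace NProgram

/-- The atoms heading some rule of a program; `⊥` is not an atom. -/
def heads {α : Type*} (P : NProgram α) : Set α :=
  {a | ∃ r ∈ P, r.head = some a}

/-- The atoms occurring, positively or negated, in the body of some rule of a program. -/
def bodyAtoms {α : Type*} (P : NProgram α) : Set α :=
  {a | ∃ r ∈ P, a ∈ r.pos ∨ a ∈ r.neg}

end NProgram

/-- No constraint (`⊥`-headed rule) of the reduct `P^I` has its positive body inside `I`: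
condition (ii) in the definition of an answer set. -/
def SatisfiesConstraints {α : Type*} (P : NProgram α) (I : Set α) : Prop :=
  ¬ ∃ r ∈ P, InReduct I r ∧ r.head = none ∧ ↑r.pos ⊆ I

section Splitting

variable {α : Type*} {P Q Pb Pt : NProgram α} {r : NRule α} {I I' J J' S : Set α} {a : α}

theorem NProgram.heads_union : (P ∪ Q : NProgram α).heads = P.heads ∪ Q.heads := by
  ext a
  simp only [NProgram.heads, Set.mem_union, Set.mem_ofPred_eq, or_and_right, exists_or]

theorem heads_facts : (facts S).heads = S := by
  ext a
  constructor
  · rintro ⟨_, ⟨b, hb, rfl⟩, hhead⟩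
    exact Option.some.inj hhead ▸ hb
  · exact fun ha => ⟨_, ⟨a, ha, rfl⟩, rfl⟩

theorem IsSplitting.disjoint_bodyAtoms_heads (h : IsSplitting Pb Pt) :
    Disjoint Pb.bodyAtoms Pt.heads := by
  refine Set.disjoint_left.2 ?_
  rintro a ⟨r, hr, hpos | hneg⟩
  · exact h a ⟨r, hr, Or.inl (Or.inr hpos)⟩
  · exact h a ⟨r, hr, Or.inr hneg⟩

theorem closedUnder_union :
    ClosedUnder (P ∪ Q) I J ↔ ClosedUnder P I J ∧ ClosedUnder Q I J :=
  forall₂_or_left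

theorem closedUnder_facts : ClosedUnder (facts S) I J ↔ S ⊆ J := by
  constructor
  · intro h a ha
    exact h _ ⟨a, ha, rfl⟩ (by simp [InReduct]) a rfl (by simp)
  · rintro h _ ⟨b, hb, rfl⟩ - a hhead -
    exact h (Option.some.inj hhead ▸ hb)

theorem satisfiesConstraints_union :
    SatisfiesConstraints (P ∪ Q) I ↔ SatisfiesConstraints P I ∧ SatisfiesConstraints Q I := by
  simp only [SatisfiesConstraints, Set.mem_union, or_and_right, exists_or, not_or]

theorem inReduct_congr (h : ∀ a ∈ r.neg, (a ∈ I ↔ a ∈ I')) : InReduct I r ↔ InReduct I' r :=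
  forall₂_congr fun a ha => not_congr (h a ha)

theorem closedUnder_congr_reduct (h : ∀ a ∈ P.bodyAtoms, (a ∈ I ↔ a ∈ I')) :
    ClosedUnder P I J ↔ ClosedUnder P I' J :=
  forall₂_congr fun r hr =>
    imp_congr_left (inReduct_congr fun a ha => h a ⟨r, hr, Or.inr ha⟩)

theorem ClosedUnder.of_subset (hJ : ClosedUnder P I J) (hsub : J ⊆ J')
    (hbody : ∀ a ∈ P.bodyAtoms, a ∈ J' → a ∈ J) : ClosedUnder P I J' :=
  fun r hr hred a hhead hpos =>
    hsub (hJ r hr hred a hhead fun b hb => hbody b ⟨r, hr, Or.inl hb⟩ (hpos hb))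

theorem satisfiesConstraints_congr (h : ∀ a ∈ P.bodyAtoms, (a ∈ I ↔ a ∈ I')) :
    SatisfiesConstraints P I ↔ SatisfiesConstraints P I' := by
  refine not_congr (exists_congr fun r => and_congr_right fun hr => ?_)
  have hred : InReduct I r ↔ InReduct I' r :=
    inReduct_congr fun a ha => h a ⟨r, hr, Or.inr ha⟩
  have hpos : ↑r.pos ⊆ I ↔ ↑r.pos ⊆ I' :=
    forall₂_congr fun a ha => h a ⟨r, hr, Or.inl ha⟩
  rw [hred, hpos]

theorem ClosedUnder.inter_heads (hJ : ClosedUnder P I J) : ClosedUnder P I (J ∩ P.heads) :=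
  fun r hr hred a hhead hpos =>
    ⟨hJ r hr hred a hhead (hpos.trans Set.inter_subset_left), r, hr, hhead⟩

theorem IsAnswerSet.subset_heads (hI : IsAnswerSet P I) : I ⊆ P.heads :=
  (hI.1.2 _ hI.1.1.inter_heads).trans Set.inter_subset_right

theorem ClosedUnder.facts_subset (hJ : ClosedUnder (P ∪ facts S) I J) : S ⊆ J :=
  closedUnder_facts.1 (closedUnder_union.1 hJ).2

theorem IsAnswerSet.mem_iff_of_notMem_heads (hJ : IsAnswerSet (P ∪ facts S) J) (ha : a ∉ P.heads) :
    a ∈ J ↔ a ∈ S := by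
  refine ⟨fun haJ => ?_, fun haS => hJ.1.1.facts_subset haS⟩
  have hhead : a ∈ P.heads ∪ S := by
    simpa only [NProgram.heads_union, heads_facts] using hJ.subset_heads haJ
  exact hhead.resolve_left ha

theorem answerSet_of_splitting_general (hdisj : Disjoint Pb.bodyAtoms Pt.heads)
    (hI : IsAnswerSet Pb I) (hJ : IsAnswerSet (Pt ∪ facts I) J) : IsAnswerSet (Pb ∪ Pt) J := by
  have hagree : ∀ a ∈ Pb.bodyAtoms, (a ∈ J ↔ a ∈ I) := fun a ha =>
    hJ.mem_iff_of_notMem_heads (Set.disjoint_left.1 hdisj ha)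
  have hclosed_bottom : ClosedUnder Pb J J :=
    (closedUnder_congr_reduct hagree).2
      (hI.1.1.of_subset hJ.1.1.facts_subset fun a ha => (hagree a ha).1)
  have hclosed_top : ClosedUnder Pt J J := (closedUnder_union.1 hJ.1.1).1
  refine ⟨⟨closedUnder_union.2 ⟨hclosed_bottom, hclosed_top⟩, fun K hK => ?_⟩, ?_⟩
  · obtain ⟨hK_bottom, hK_top⟩ := closedUnder_union.1 hK
    have hIK : I ⊆ K := hI.1.2 K ((closedUnder_congr_reduct hagree).1 hK_bottom)
    exact hJ.1.2 K (closedUnder_union.2 ⟨hK_top, closedUnder_facts.2 hIK⟩)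
  · exact satisfiesConstraints_union.2
      ⟨(satisfiesConstraints_congr hagree).2 hI.2, (satisfiesConstraints_union.1 hJ.2).1⟩

end Splitting

/-- splitting theorem, upward direction.  If `(Pb, Pt)` is a
splitting of `P = Pb ∪ Pt`, `Ib` is an answer set of `Pb`, and `J` is an answer
set of `Pt ∪ Ib` (with `Ib` viewed as a set of facts), then `J` is an answer
set of `P`. -/
theorem answerSet_of_splitting {α : Type*} (P Pb Pt : NProgram α) (Ib J : Set α)
    (hP : P = Pb ∪ Pt) (hsplit : IsSplitting Pb Pt)
    (hIb : IsAnswerSet Pb Ib) (hJ : IsAnswerSet (Pt ∪ facts Ib) J) :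
    IsAnswerSet P J := by
  subst hP
  exact answerSet_of_splitting_general hsplit.disjoint_bodyAtoms_heads hIb hJ
end

section
/- Let P be a normal program over a set A of propositional atoms, let (r_z)_{z∈Z} be a family of pairwise distinct rules of P, let (D_z)_{z∈Z} be a family of subsets of A such that pos(r_z) ∩ D_z ≠ ∅ for every z ∈ Z, and let (f_z)_{z∈Z} be pairwise distinct fresh atoms not belonging to A. Let P′ be the program over A ∪ {f_z : z ∈ Z} obtained from P by replacing each rule r_z by the rule with the same head, positive body pos(r_z) ∪ {f_z}, and negated body neg(r_z), and by adding, for every z ∈ Z and every d ∈ D_z, the rule f_z ← d. Then a set J ⊆ A ∪ {f_z : z ∈ Z} is an answer set of P′ if and only if J ∩ A is an answer set of P and, for every z ∈ Z, f_z ∈ J exactly when (J ∩ A) ∩ D_z ≠ ∅. In particular, P and P′ have the same answer sets modulo the atoms f_z. -/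
/-!
Adding `f z` to the positive body of `r z` does not affect its applicability in a set `K` closed
under the rules `f z ← d`, because `pos (r z)` meets `D z`. Hence the sets closed under the reduct
of the rewriting are the sets closed under the reduct of `P` that contain their projected atoms
`{f z | K ∩ D z ≠ ∅}`. Since the fresh atoms occur neither in `P` nor in any `D z`, the two
conditions decouple: the least such set is the least set closed under the reduct of `P`, together
with its projected atoms.
-/

section Applicable

variable {α : Type*} {s : NRule α} {P : NProgram α} {F I K : Set α}

/-- The rule `s` survives in the reduct with respect to `I` and its positive body holds in `K`.
Closure under a program and satisfaction of its constraints both say that the heads of its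
applicable rules have a certain property. -/
def NRule.Applicable (I K : Set α) (s : NRule α) : Prop :=
  InReduct I s ∧ ↑s.pos ⊆ K

theorem NRule.applicable_sdiff_left (hs : Disjoint s.atoms F) :
    s.Applicable (I \ F) K ↔ s.Applicable I K := by
  have hneg : ∀ a ∈ s.neg, a ∉ F := fun a ha => Set.disjoint_left.1 hs (Or.inr ha)
  refine and_congr_left fun _ => forall₂_congr fun a ha => ?_
  simp only [Set.mem_sdiff, hneg a ha, not_false_eq_true, and_true]

theorem NRule.applicable_sdiff_right (hs : Disjoint s.atoms F) :
    s.Applicable I (K \ F) ↔ s.Applicable I K := by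
  have hpos : Disjoint (↑s.pos) F := hs.mono_left fun _ ha => Or.inl (Or.inr ha)
  simp only [NRule.Applicable, Set.subset_sdiff, hpos, and_true]

theorem closedUnder_iff_forall_applicable :
    ClosedUnder P I K ↔ ∀ s ∈ P, s.Applicable I K → ∀ a ∈ s.head, a ∈ K :=
  ⟨fun h s hs hsK a ha => h s hs hsK.1 a ha hsK.2,
    fun h s hs hsI a ha hsK => h s hs ⟨hsI, hsK⟩ a ha⟩

theorem isAnswerSet_iff_isLeast :
    IsAnswerSet P I ↔
      IsLeast {K | ClosedUnder P I K} I ∧ ∀ s ∈ P, s.Applicable I I → s.head ≠ none := by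
  refine and_congr Iff.rfl ⟨fun h s hs hsI hnone => h ⟨s, hs, hsI.1, hnone, hsI.2⟩, ?_⟩
  rintro h ⟨s, hs, hsI, hnone, hpos⟩
  exact h s hs ⟨hsI, hpos⟩ hnone

theorem closedUnder_sdiff_left (hP : ∀ s ∈ P, Disjoint s.atoms F) :
    ClosedUnder P (I \ F) K ↔ ClosedUnder P I K := by
  simp only [closedUnder_iff_forall_applicable]
  exact forall₂_congr fun s hs => by rw [NRule.applicable_sdiff_left (hP s hs)]

theorem closedUnder_sdiff_right (hP : ∀ s ∈ P, Disjoint s.atoms F) :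
    ClosedUnder P I (K \ F) ↔ ClosedUnder P I K := by
  simp only [closedUnder_iff_forall_applicable]
  refine forall₂_congr fun s hs => ?_
  rw [NRule.applicable_sdiff_right (hP s hs)]
  refine imp_congr_right fun _ => forall₂_congr fun a ha => ?_
  exact and_iff_left (Set.disjoint_left.1 (hP s hs) (Or.inl (Or.inl ha)))

end Applicable

section GeneralizedBooleanAlgebra

variable {β : Type*} [GeneralizedBooleanAlgebra β] {a b c : β}

theorem inf_eq_sdiff_of_le_sup (hbc : Disjoint b c) (ha : a ≤ b ⊔ c) : a ⊓ b = a \ c :=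
  le_antisymm (le_sdiff.2 ⟨inf_le_left, hbc.mono_left inf_le_right⟩)
    (le_inf sdiff_le (sdiff_le_iff'.2 ha))

theorem isLeast_setOf_and_le_iff {p : β → Prop} {g : β → β} (hp : ∀ x, p (x \ c) ↔ p x)
    (hg : Monotone g) (hgc : ∀ x, g x ≤ c) (hg_sdiff : ∀ x, g (x \ c) = g x) :
    IsLeast {x | p x ∧ g x ≤ x} a ↔ IsLeast {x | p x} (a \ c) ∧ a ⊓ c = g a := by
  constructor
  · rintro ⟨⟨hpa, hga⟩, hmin⟩
    have ha_le : ∀ x, p x → a ≤ x \ c ⊔ g x := by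
      intro x hx
      have hsdiff : (x \ c ⊔ g x) \ c = x \ c := by
        rw [sup_sdiff, sdiff_idem, sdiff_eq_bot_iff.2 (hgc x), sup_bot_eq]
      refine hmin ⟨?_, ?_⟩
      · rwa [← hp, hsdiff, hp]
      · rw [← hg_sdiff, hsdiff, hg_sdiff]
        exact le_sup_right
    refine ⟨⟨(hp a).2 hpa, fun x hx => ?_⟩, le_antisymm ?_ (le_inf hga (hgc a))⟩
    · exact sdiff_le_iff'.2 ((ha_le x hx).trans (sup_le_sup sdiff_le (hgc x)))
    · calc a ⊓ c ≤ (a \ c ⊔ g a) ⊓ c := inf_le_inf_right c (ha_le a hpa)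
        _ = g a := by rw [inf_sup_right, inf_comm, inf_sdiff_self_right, bot_sup_eq,
            inf_eq_left.2 (hgc a)]
  · rintro ⟨⟨hpa, hmin⟩, hac⟩
    refine ⟨⟨(hp a).1 hpa, hac ▸ inf_le_left⟩, ?_⟩
    rintro x ⟨hpx, hgx⟩
    have hax : a \ c ≤ x := hmin hpx
    calc a = a \ c ⊔ g (a \ c) := by rw [hg_sdiff, ← hac, sup_comm, sup_inf_sdiff]
      _ ≤ x := sup_le hax ((hg hax).trans hgx)

end GeneralizedBooleanAlgebra

section Projection

variable {α Z : Type*} {D : Z → Set α} {f : Z → α} {I J K : Set α}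

/-- The atoms `f z` derived in one step from `K` by the rules `f z ← d` with `d ∈ D z`. -/
def projectedAtoms (D : Z → Set α) (f : Z → α) (K : Set α) : Set α :=
  f '' {z | (K ∩ D z).Nonempty}

theorem projectedAtoms_mono : Monotone (projectedAtoms D f) := fun _ _ hKL =>
  Set.image_mono fun _ hz => hz.mono (Set.inter_subset_inter_left _ hKL)

theorem projectedAtoms_subset_range : projectedAtoms D f K ⊆ Set.range f :=
  Set.image_subset_range _ _

theorem projectedAtoms_sdiff {F : Set α} (hD : ∀ z, Disjoint (D z) F) :
    projectedAtoms D f (K \ F) = projectedAtoms D f K := by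
  have hKD (z : Z) : K \ F ∩ D z = K ∩ D z := by
    rw [← Set.inter_sdiff_right_comm, Set.inter_sdiff_assoc, (hD z).sdiff_eq_left]
  simp only [projectedAtoms, hKD]

theorem inter_range_eq_projectedAtoms_iff (hf : Function.Injective f) :
    J ∩ Set.range f = projectedAtoms D f J ↔ ∀ z, f z ∈ J ↔ (J ∩ D z).Nonempty := by
  rw [← Set.image_preimage_eq_inter_range, projectedAtoms, hf.image_injective.eq_iff]
  exact Set.ext_iff

variable [DecidableEq α] {P : NProgram α} {r : Z → NRule α}

/-- The rule obtained from `s` by adding the atom `a` to its positive body. -/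
def NRule.addPos (s : NRule α) (a : α) : NRule α :=
  ⟨s.head, insert a s.pos, s.neg⟩

/-- The projection rewriting of `P`: the atom `f z` is added to the positive body of the rule `r z`
and defined by the rules `f z ← d` for `d ∈ D z`. A rule occurring several times in the family `r`
is replaced by one copy for each occurrence. -/
def projectionRewriting (P : NProgram α) (r : Z → NRule α) (D : Z → Set α) (f : Z → α) :
    NProgram α :=
  (P \ Set.range r) ∪ Set.range (fun z => (r z).addPos (f z))
    ∪ {s | ∃ z, ∃ d ∈ D z, s = ⟨some (f z), {d}, ∅⟩}

theorem NRule.applicable_addPos {s : NRule α} {a : α} :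
    (s.addPos a).Applicable I K ↔ s.Applicable I K ∧ a ∈ K := by
  simp only [NRule.Applicable, NRule.addPos, InReduct, Finset.coe_insert, Set.insert_subset_iff]
  tauto

theorem applicable_addPos_iff_of_projectedAtoms_subset {s : NRule α} {z : Z}
    (hsD : (↑s.pos ∩ D z).Nonempty) (hK : projectedAtoms D f K ⊆ K) :
    (s.addPos (f z)).Applicable I K ↔ s.Applicable I K := by
  rw [NRule.applicable_addPos, and_iff_left_iff_imp]
  rintro ⟨-, hpos⟩
  exact hK ⟨z, hsD.mono (Set.inter_subset_inter_left _ hpos), rfl⟩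

theorem forall_applicable_projectionRewriting (hr : ∀ z, r z ∈ P)
    (hrD : ∀ z, (↑(r z).pos ∩ D z).Nonempty) (hK : projectedAtoms D f K ⊆ K)
    {C : Option α → Prop} (hC : ∀ a ∈ projectedAtoms D f K, C (some a)) :
    (∀ s ∈ projectionRewriting P r D f, s.Applicable I K → C s.head) ↔
      ∀ s ∈ P, s.Applicable I K → C s.head := by
  have happ (z : Z) := applicable_addPos_iff_of_projectedAtoms_subset (I := I) (hrD z) hK
  constructor
  · intro h s hs hsK
    by_cases hsr : s ∈ Set.range r
    · obtain ⟨z, rfl⟩ := hsr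
      exact h ((r z).addPos (f z)) (Or.inl (Or.inr ⟨z, rfl⟩)) ((happ z).2 hsK)
    · exact h s (Or.inl (Or.inl ⟨hs, hsr⟩)) hsK
  · rintro h s ((⟨hs, -⟩ | ⟨z, rfl⟩) | ⟨z, d, hd, rfl⟩) hsK
    · exact h s hs hsK
    · exact h (r z) (hr z) ((happ z).1 hsK)
    · exact hC _ ⟨z, ⟨d, hsK.2 (Finset.mem_singleton_self d), hd⟩, rfl⟩

theorem ClosedUnder.projectedAtoms_subset (h : ClosedUnder (projectionRewriting P r D f) I K) :
    projectedAtoms D f K ⊆ K := by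
  rintro _ ⟨z, ⟨d, hdK, hdD⟩, rfl⟩
  refine h ⟨some (f z), {d}, ∅⟩ (Or.inr ⟨z, d, hdD, rfl⟩) (fun a ha => ?_) (f z) rfl ?_
  · exact absurd ha (Finset.notMem_empty a)
  · rwa [Finset.coe_singleton, Set.singleton_subset_iff]

theorem closedUnder_projectionRewriting_iff (hr : ∀ z, r z ∈ P)
    (hrD : ∀ z, (↑(r z).pos ∩ D z).Nonempty) :
    ClosedUnder (projectionRewriting P r D f) I K ↔
      ClosedUnder P I K ∧ projectedAtoms D f K ⊆ K := by
  rw [← and_iff_left_of_imp ClosedUnder.projectedAtoms_subset]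
  refine and_congr_left fun hK => ?_
  simp only [closedUnder_iff_forall_applicable]
  refine forall_applicable_projectionRewriting hr hrD hK (C := fun o => ∀ a ∈ o, a ∈ K) ?_
  rintro _ ha _ ⟨⟩
  exact hK ha

theorem forall_applicable_head_ne_none_iff (hr : ∀ z, r z ∈ P)
    (hrD : ∀ z, (↑(r z).pos ∩ D z).Nonempty) (hK : projectedAtoms D f K ⊆ K) :
    (∀ s ∈ projectionRewriting P r D f, s.Applicable I K → s.head ≠ none) ↔
      ∀ s ∈ P, s.Applicable I K → s.head ≠ none :=
  forall_applicable_projectionRewriting hr hrD hK (C := (· ≠ none)) fun a _ => Option.some_ne_none a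

theorem projection_rewriting_answerSets_general (hP : ∀ s ∈ P, Disjoint s.atoms (Set.range f))
    (hr : ∀ z, r z ∈ P) (hD : ∀ z, Disjoint (D z) (Set.range f))
    (hrD : ∀ z, (↑(r z).pos ∩ D z).Nonempty) :
    IsAnswerSet (projectionRewriting P r D f) J ↔
      IsAnswerSet P (J \ Set.range f) ∧ J ∩ Set.range f = projectedAtoms D f J := by
  simp only [isAnswerSet_iff_isLeast, closedUnder_projectionRewriting_iff hr hrD,
    closedUnder_sdiff_left hP]
  rw [isLeast_setOf_and_le_iff (fun _ => closedUnder_sdiff_right hP) projectedAtoms_mono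
    (fun _ => projectedAtoms_subset_range) (fun _ => projectedAtoms_sdiff hD), and_right_comm]
  refine and_congr_left fun hJ => and_congr_right fun _ => ?_
  rw [forall_applicable_head_ne_none_iff hr hrD (hJ ▸ Set.inter_subset_left)]
  refine forall₂_congr fun s hs => ?_
  rw [NRule.applicable_sdiff_left (hP s hs), NRule.applicable_sdiff_right (hP s hs)]

end Projection

/-- propositional projection rewriting.  Let `P` be a normal
program whose rules use only atoms from `A`, `(r z)` a family of pairwise
distinct rules of `P`, `(D z)` a family of subsets of `A` with
`pos (r z) ∩ D z ≠ ∅`, and `(f z)` pairwise distinct fresh atoms not in `A`.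
Let `P'` be obtained from `P` by replacing each rule `r z` by the rule with the
same head, positive body `pos (r z) ∪ {f z}` and negated body `neg (r z)`, and
adding the rule `f z ← d` for every `z` and every `d ∈ D z`.  Then
`J ⊆ A ∪ {f z : z}` is an answer set of `P'` iff `J ∩ A` is an answer set of
`P` and, for every `z`, `f z ∈ J` exactly when `(J ∩ A) ∩ D z ≠ ∅`. -/
theorem projection_rewriting_answerSets {α Z : Type*} [DecidableEq α]
    (A : Set α) (P : NProgram α) (hPA : ∀ r ∈ P, r.atoms ⊆ A)
    (r : Z → NRule α) (hrP : ∀ z, r z ∈ P) (hrinj : Function.Injective r)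
    (D : Z → Set α) (hDA : ∀ z, D z ⊆ A)
    (hDpos : ∀ z, (↑(r z).pos ∩ D z).Nonempty)
    (f : Z → α) (hfinj : Function.Injective f) (hfA : ∀ z, f z ∉ A)
    (P' : NProgram α)
    (hP' : P' =
      (P \ Set.range r)
        ∪ Set.range (fun z => (⟨(r z).head, insert (f z) (r z).pos, (r z).neg⟩ : NRule α))
        ∪ {r' | ∃ z, ∃ d ∈ D z, r' = ⟨some (f z), {d}, ∅⟩}) :
    ∀ J ⊆ A ∪ Set.range f,
      (IsAnswerSet P' J ↔
        IsAnswerSet P (J ∩ A) ∧ ∀ z, (f z ∈ J ↔ (J ∩ A ∩ D z).Nonempty)) := by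
  intro J hJ
  have hA : Disjoint A (Set.range f) := Set.disjoint_right.2 (Set.forall_mem_range.2 hfA)
  have hJD (z : Z) : J ∩ A ∩ D z = J ∩ D z := by
    rw [Set.inter_assoc, Set.inter_eq_right.2 (hDA z)]
  simp only [hJD]
  have hJA : J ∩ A = J \ Set.range f := inf_eq_sdiff_of_le_sup hA hJ
  rw [hP', hJA, ← inter_range_eq_projectedAtoms_iff hfinj]
  exact projection_rewriting_answerSets_general (fun s hs => hA.mono_left (hPA s hs)) hrP
    (fun z => hA.mono_left (hDA z)) hDpos
end

section
/- Let P be a normal program over a set A of propositional atoms, let B ⊆ A be a set of atoms such that no rule of P has its head in B, and let I_b ⊆ B. Let Q be the program obtained from P by deleting every rule r such that pos(r) ∩ (B \ I_b) ≠ ∅ or neg(r) ∩ I_b ≠ ∅, and by removing from the bodies of the remaining rules all positive body atoms in I_b and all negated body atoms in B \ I_b. Then for every I ⊆ A, I is an answer set of P ∪ I_b if and only if I is an answer set of Q ∪ I_b. (This is the simplification of rule bodies by the lower-level answer set used in the proof of the splitting-based replacement theorem.) -/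
/-!
Answer sets are supported, so no answer set of `P ∪ facts S` meets a set `F` of atoms that are
neither heads of `P` nor facts. For `I` disjoint from `F` and `S ⊆ J ⊆ I`, evaluating the atoms of
`S` to true and those of `F` to false does not change which heads the reduct by `I` derives from
`J`, and these interpretations `J` suffice to test whether `I` is an answer set.
-/

/-- The immediate consequence operator of the reduct `P^I`, applied to `J`. Since heads are options,
`none` is a consequence exactly when some constraint of the reduct is violated by `J`. -/
def NProgram.consequences {α : Type*} (P : NProgram α) (I J : Set α) : Set (Option α) :=
  {o | ∃ r ∈ P, InReduct I r ∧ r.head = o ∧ ↑r.pos ⊆ J}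

section Consequences

variable {α : Type*} {P Q : NProgram α} {I J J' S F : Set α}

theorem NProgram.consequences_mono (h : J ⊆ J') : P.consequences I J ⊆ P.consequences I J' :=
  fun _ ⟨r, hr, hred, hhead, hpos⟩ => ⟨r, hr, hred, hhead, hpos.trans h⟩

theorem NProgram.consequences_union_facts :
    NProgram.consequences (P ∪ facts S) I J = P.consequences I J ∪ some '' S := by
  ext o
  constructor
  · rintro ⟨r, hr | ⟨a, ha, rfl⟩, hfires⟩
    · exact Or.inl ⟨r, hr, hfires⟩
    · exact Or.inr ⟨a, ha, hfires.2.1⟩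
  · rintro (⟨r, hr, hfires⟩ | ⟨a, ha, rfl⟩)
    · exact ⟨r, Or.inl hr, hfires⟩
    · exact ⟨⟨some a, ∅, ∅⟩, Or.inr ⟨a, ha, rfl⟩, by simp [InReduct]⟩

theorem closedUnder_iff_consequences_subset :
    ClosedUnder P I J ↔ some ⁻¹' P.consequences I J ⊆ J := by
  constructor
  · rintro hJ a ⟨r, hr, hred, hhead, hpos⟩
    exact hJ r hr hred a hhead hpos
  · exact fun hJ r hr hred a hhead hpos => hJ ⟨r, hr, hred, hhead, hpos⟩

theorem closedUnder_union_facts : ClosedUnder (P ∪ facts S) I J ↔ ClosedUnder P I J ∧ S ⊆ J := by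
  simp only [closedUnder_iff_consequences_subset, NProgram.consequences_union_facts,
    Set.preimage_union, Set.union_subset_iff, Set.preimage_image_eq _ (Option.some_injective α)]

theorem ClosedUnder.inter (hJ : ClosedUnder P I J) (hJ' : ClosedUnder P I J') :
    ClosedUnder P I (J ∩ J') := fun r hr hred a hhead hpos =>
  ⟨hJ r hr hred a hhead (hpos.trans Set.inter_subset_left),
    hJ' r hr hred a hhead (hpos.trans Set.inter_subset_right)⟩

theorem isAnswerSet_iff_forall_subset :
    IsAnswerSet P I ↔ ClosedUnder P I I ∧ (∀ J ⊆ I, ClosedUnder P I J → I ⊆ J) ∧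
      none ∉ P.consequences I I := by
  rw [IsAnswerSet, and_assoc]
  refine and_congr_right fun hI => and_congr_left fun _ => ?_
  exact ⟨fun hleast J _ => hleast J, fun hleast J hJ =>
    (hleast (J ∩ I) Set.inter_subset_right (hJ.inter hI)).trans Set.inter_subset_left⟩

theorem IsAnswerSet.subset_consequences (h : IsAnswerSet P I) :
    I ⊆ some ⁻¹' P.consequences I I := by
  refine h.1.2 _ (closedUnder_iff_consequences_subset.2 ?_)
  exact Set.preimage_mono <|
    NProgram.consequences_mono (closedUnder_iff_consequences_subset.1 h.1.1)

theorem IsAnswerSet.disjoint_of_union_facts (h : IsAnswerSet (P ∪ facts S) I)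
    (hF : ∀ r ∈ P, ∀ a : α, r.head = some a → a ∉ F) (hSF : Disjoint S F) : Disjoint I F := by
  refine Set.disjoint_left.2 fun a haI => ?_
  have ha : some a ∈ P.consequences I I ∪ some '' S :=
    NProgram.consequences_union_facts ▸ h.subset_consequences haI
  obtain ⟨r, hr, -, hhead, -⟩ | ⟨b, hb, hba⟩ := ha
  · exact hF r hr a hhead
  · exact Set.disjoint_left.1 hSF (Option.some_injective α hba ▸ hb)

theorem isAnswerSet_union_facts_congr
    (h : ∀ J, S ⊆ J → J ⊆ I → P.consequences I J = Q.consequences I J) :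
    IsAnswerSet (P ∪ facts S) I ↔ IsAnswerSet (Q ∪ facts S) I := by
  have closed_iff (J : Set α) (hJI : J ⊆ I) :
      ClosedUnder (P ∪ facts S) I J ↔ ClosedUnder (Q ∪ facts S) I J := by
    simp only [closedUnder_union_facts]
    refine and_congr_left fun hSJ => ?_
    rw [closedUnder_iff_consequences_subset, closedUnder_iff_consequences_subset, h J hSJ hJI]
  rw [isAnswerSet_iff_forall_subset, isAnswerSet_iff_forall_subset, closed_iff I subset_rfl]
  refine and_congr_right fun hI => and_congr ?_ ?_
  · exact forall₂_congr fun J hJI => by rw [closed_iff J hJI]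
  · rw [NProgram.consequences_union_facts, NProgram.consequences_union_facts,
      h I (closedUnder_union_facts.1 hI).2 subset_rfl]

end Consequences

open scoped Classical in
/-- The rule `r` without the positive body atoms in `S` and the negated body atoms in `F`: the body
literals that hold when the atoms of `S` are true and those of `F` are false. -/
noncomputable def NRule.partialEval {α : Type*} (S F : Set α) (r : NRule α) : NRule α :=
  ⟨r.head, r.pos.filter (· ∉ S), r.neg.filter (· ∉ F)⟩

/-- The partial evaluation of `P` with the atoms of `S` true and those of `F` false: rules with a
falsified body literal are deleted, and the remaining rules lose their satisfied body literals. -/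
def NProgram.partialEval {α : Type*} (P : NProgram α) (S F : Set α) : NProgram α :=
  NRule.partialEval S F '' {r ∈ P | Disjoint ↑r.pos F ∧ Disjoint ↑r.neg S}

section PartialEval

variable {α : Type*} {P : NProgram α} {I J S F : Set α} {r r' : NRule α}

theorem NRule.coe_pos_partialEval : ((r.partialEval S F).pos : Set α) = ↑r.pos \ S := by
  ext a
  simp [NRule.partialEval]

theorem NRule.coe_neg_partialEval : ((r.partialEval S F).neg : Set α) = ↑r.neg \ F := by
  ext a
  simp [NRule.partialEval]

theorem NRule.eq_partialEval_iff :
    r' = r.partialEval S F ↔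
      r'.head = r.head ∧ (r'.pos : Set α) = ↑r.pos \ S ∧ (r'.neg : Set α) = ↑r.neg \ F := by
  rw [← coe_pos_partialEval (F := F), ← coe_neg_partialEval (S := S), Finset.coe_inj,
    Finset.coe_inj]
  cases r'
  simp only [partialEval, mk.injEq]

theorem NProgram.partialEval_eq_setOf :
    P.partialEval S F = {r' | ∃ r ∈ P, (r.pos : Set α) ∩ F = ∅ ∧ (r.neg : Set α) ∩ S = ∅ ∧
      r'.head = r.head ∧ (r'.pos : Set α) = ↑r.pos \ S ∧ (r'.neg : Set α) = ↑r.neg \ F} := by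
  ext r'
  simp only [NProgram.partialEval, Set.mem_image, Set.mem_ofPred_eq, and_assoc,
    Set.disjoint_iff_inter_eq_empty, eq_comm (b := r'), NRule.eq_partialEval_iff]

theorem inReduct_iff_disjoint : InReduct I r ↔ Disjoint (r.neg : Set α) I :=
  Set.disjoint_left.symm

theorem inReduct_partialEval_iff (hIF : Disjoint I F) :
    InReduct I (r.partialEval S F) ↔ InReduct I r := by
  rw [inReduct_iff_disjoint, inReduct_iff_disjoint, NRule.coe_neg_partialEval,
    disjoint_sdiff_comm, hIF.sdiff_eq_left]

theorem NRule.pos_partialEval_subset_iff (hSJ : S ⊆ J) :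
    ((r.partialEval S F).pos : Set α) ⊆ J ↔ ↑r.pos ⊆ J := by
  rw [coe_pos_partialEval, Set.sdiff_subset_iff, Set.union_eq_right.2 hSJ]

theorem NProgram.consequences_partialEval (hSJ : S ⊆ J) (hJI : J ⊆ I) (hIF : Disjoint I F) :
    (P.partialEval S F).consequences I J = P.consequences I J := by
  ext o
  constructor
  · rintro ⟨_, ⟨r, ⟨hr, -⟩, rfl⟩, hred, hhead, hpos⟩
    exact ⟨r, hr, (inReduct_partialEval_iff hIF).1 hred, hhead,
      (NRule.pos_partialEval_subset_iff hSJ).1 hpos⟩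
  · rintro ⟨r, hr, hred, hhead, hpos⟩
    have pos_disjoint : Disjoint ↑r.pos F := hIF.mono_left (hpos.trans hJI)
    have neg_disjoint : Disjoint ↑r.neg S :=
      (inReduct_iff_disjoint.1 hred).mono_right (hSJ.trans hJI)
    exact ⟨r.partialEval S F, ⟨r, ⟨hr, pos_disjoint, neg_disjoint⟩, rfl⟩,
      (inReduct_partialEval_iff hIF).2 hred, hhead,
      (NRule.pos_partialEval_subset_iff hSJ).2 hpos⟩

end PartialEval

theorem simplification_answerSets_general {α : Type*} {P : NProgram α} {S F : Set α}
    (hF : ∀ r ∈ P, ∀ a : α, r.head = some a → a ∉ F) (hSF : Disjoint S F) (I : Set α) :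
    IsAnswerSet (P ∪ facts S) I ↔ IsAnswerSet (P.partialEval S F ∪ facts S) I := by
  have hF' : ∀ r ∈ P.partialEval S F, ∀ a : α, r.head = some a → a ∉ F := by
    rintro _ ⟨r, ⟨hr, -⟩, rfl⟩
    exact hF r hr
  have iff_of_disjoint (hIF : Disjoint I F) :
      IsAnswerSet (P ∪ facts S) I ↔ IsAnswerSet (P.partialEval S F ∪ facts S) I :=
    isAnswerSet_union_facts_congr fun _ hSJ hJI =>
      (NProgram.consequences_partialEval hSJ hJI hIF).symm
  exact ⟨fun h => (iff_of_disjoint (h.disjoint_of_union_facts hF hSF)).1 h,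
    fun h => (iff_of_disjoint (h.disjoint_of_union_facts hF' hSF)).2 h⟩

/-- simplification by the lower-level answer set.  Let `B` be
a set of atoms containing no head of a rule of `P` and let `Ib ⊆ B`.  Let `Q`
be obtained from `P` by deleting every rule with a positive body atom in
`B \ Ib` or a negated body atom in `Ib`, and by removing from the remaining
rules all positive body atoms in `Ib` and all negated body atoms in `B \ Ib`.
Then for every `I`, `I` is an answer set of `P ∪ Ib` iff `I` is an answer set
of `Q ∪ Ib` (with `Ib` viewed as a set of facts). -/
theorem simplification_answerSets {α : Type*} (P : NProgram α) (B Ib : Set α)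
    (hB : ∀ r ∈ P, ∀ a : α, r.head = some a → a ∉ B) (hIb : Ib ⊆ B)
    (Q : NProgram α)
    (hQ : Q = {r' | ∃ r ∈ P,
      ↑r.pos ∩ (B \ Ib) = (∅ : Set α) ∧ ↑r.neg ∩ Ib = (∅ : Set α) ∧
      r'.head = r.head ∧ ↑r'.pos = ↑r.pos \ Ib ∧ ↑r'.neg = ↑r.neg \ (B \ Ib)}) :
    ∀ I : Set α, IsAnswerSet (P ∪ facts Ib) I ↔ IsAnswerSet (Q ∪ facts Ib) I := by
  rw [hQ, ← NProgram.partialEval_eq_setOf]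
  exact simplification_answerSets_general (fun r hr a ha haF => hB r hr a ha haF.1)
    Set.disjoint_sdiff_right
end

section
/- Let P be a c-program over a set A of propositional atoms none of whose rules has a cardinality constraint (so P is a normal program), let Z be an index set, and for each z ∈ Z let S_z ⊆ A, let H_z ∈ A ∪ {⊥}, let B⁺_z and B⁻_z be finite subsets of A, and let b ≥ 2. Suppose that for each z ∈ Z, P contains exactly the rules with head H_z, positive body T ∪ B⁺_z, and negated body B⁻_z for every b-element subset T of S_z, together with some further rules not of this form. Let (f_z)_{z∈Z} be pairwise distinct fresh atoms not in A, and let P″ be the c-program over A ∪ {f_z : z ∈ Z} obtained from P by replacing, for each z ∈ Z, all the rules of the above family by the single c-rule with head H_z, positive body B⁺_z ∪ {f_z}, negated body B⁻_z, and cardinality constraint (S_z, b), and by adding the rules f_z ← s for every s ∈ S_z. Then a set J ⊆ A ∪ {f_z : z ∈ Z} is an answer set of P″ if and only if J ∩ A is an answer set of P and, for each z ∈ Z, f_z ∈ J exactly when (J ∩ A) ∩ S_z ≠ ∅; in particular, P and P″ have the same answer sets modulo the atoms f_z. (This is the ground-level form of the main rewriting theorem combining projection with the introduction of the counting aggregate.)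 -/
/-- A rule of a c-program: a head (`none` represents `⊥`), finite sets of
positive and negated body atoms, and a finite set of cardinality constraints,
each a pair `(S, b)` with `S` a set of atoms and `b : ℕ`.  The type `α` is the
set of propositional atoms. -/
structure CRule (α : Type*) where
  head : Option α
  pos : Finset α
  neg : Finset α
  agg : Finset (Set α × ℕ)

/-- A c-program is a set of c-rules. -/
abbrev CProgram (α : Type*) := Set (CRule α)

/-- A cardinality constraint `(S, b)` is satisfied by `J` if `J ∩ S` has at
least `b` elements. -/
def SatConstraint {α : Type*} (J : Set α) (c : Set α × ℕ) : Prop :=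
  ∃ T : Finset α, ↑T ⊆ J ∩ c.1 ∧ c.2 ≤ T.card

/-- A c-rule fires on `J` if its positive body is contained in `J` and every
one of its cardinality constraints is satisfied by `J`. -/
def CRule.Fires {α : Type*} (r : CRule α) (J : Set α) : Prop :=
  ↑r.pos ⊆ J ∧ ∀ c ∈ r.agg, SatConstraint J c

/-- A c-rule survives into (and is kept, with its negated body removed but its
positive body and cardinality constraints kept, in) the reduct `P^I` iff its
negated body is disjoint from `I`. -/
def CInReduct {α : Type*} (I : Set α) (r : CRule α) : Prop :=
  ∀ a ∈ r.neg, a ∉ I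

/-- `J` is closed under the atom-headed rules of the reduct `P^I`: whenever
such a rule fires on `J`, its head atom is in `J`. -/
def CClosedUnder {α : Type*} (P : CProgram α) (I J : Set α) : Prop :=
  ∀ r ∈ P, CInReduct I r → ∀ a : α, r.head = some a → r.Fires J → a ∈ J

/-- `I` is an answer set of the c-program `P`: (i) `I` is the least set closed
under the atom-headed rules of the reduct `P^I`, and (ii) no `⊥`-headed rule
of the reduct `P^I` fires on `I`. -/
def CIsAnswerSet {α : Type*} (P : CProgram α) (I : Set α) : Prop :=
  (CClosedUnder P I I ∧ ∀ J : Set α, CClosedUnder P I J → I ⊆ J) ∧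
    ¬ ∃ r ∈ P, CInReduct I r ∧ r.head = none ∧ r.Fires I

/-- The atoms occurring (in the head or body, or in a cardinality constraint)
of a c-rule. -/
def CRule.atoms {α : Type*} (r : CRule α) : Set α :=
  {a | r.head = some a} ∪ ↑r.pos ∪ ↑r.neg ∪ ⋃ c ∈ r.agg, c.1

/-!
A set containing `f z` whenever it meets `S z` cannot tell the rewritten rule from the family it
replaces: the constraint `(S z, b)` holds iff some `b`-element `T ⊆ S z` is in the set, and as
`b ≠ 0` it forces the extra body atom `f z`. Both `P''` and `P ∪ {f z ← s | s ∈ S z}` have only such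
sets as closed sets, so these two programs have the same answer sets. In the second one the atoms
`f z` are merely defined from those of `A`: the closed sets of its reduct are the `X` for which
`X ∩ A` is closed under the reduct of `P` and `X` contains every `f z` with `X ∩ S z ≠ ∅`.
-/

section SatConstraint

variable {α : Type*} {A S X : Set α} {b : ℕ}

lemma satConstraint_inter_iff (hS : S ⊆ A) :
    SatConstraint (X ∩ A) (S, b) ↔ SatConstraint X (S, b) := by
  rw [SatConstraint, SatConstraint, Set.inter_assoc, Set.inter_eq_right.2 hS]

lemma satConstraint_iff_exists_card_eq :
    SatConstraint X (S, b) ↔ ∃ T : Finset α, ↑T ⊆ S ∧ T.card = b ∧ ↑T ⊆ X := by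
  constructor
  · rintro ⟨T, hT, hb⟩
    obtain ⟨T', hT'T, hT'b⟩ := Finset.exists_subset_card_eq hb
    obtain ⟨hX, hS⟩ := Set.subset_inter_iff.1 ((Finset.coe_subset.2 hT'T).trans hT)
    exact ⟨T', hS, hT'b, hX⟩
  · rintro ⟨T, hS, rfl, hX⟩
    exact ⟨T, Set.subset_inter hX hS, le_rfl⟩

lemma SatConstraint.nonempty (h : SatConstraint X (S, b)) (hb : b ≠ 0) :
    (X ∩ S).Nonempty := by
  obtain ⟨T, hT, hbT⟩ := h
  have hTne : T.Nonempty := Finset.card_pos.1 (hb.bot_lt.trans_le hbT)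
  exact (Finset.coe_nonempty.2 hTne).mono hT

end SatConstraint

section Derivation

variable {α ι : Type*} {P Q : CProgram α} {I X : Set α} {h : Option α}

/-- `h` is an immediate consequence of `X`: some rule of the reduct `P^I` with head `h` fires on
`X`. The head `none` is allowed, so that condition (ii) on answer sets is covered too. -/
def CDerives (P : CProgram α) (I X : Set α) (h : Option α) : Prop :=
  ∃ r ∈ P, CInReduct I r ∧ r.head = h ∧ r.Fires X

lemma cClosedUnder_iff_cDerives :
    CClosedUnder P I X ↔ ∀ a, CDerives P I X (some a) → a ∈ X :=
  ⟨fun hX a ⟨r, hr, hred, hhead, hfire⟩ => hX r hr hred a hhead hfire,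
    fun hX r hr hred a hhead hfire => hX a ⟨r, hr, hred, hhead, hfire⟩⟩

lemma cIsAnswerSet_iff_isLeast :
    CIsAnswerSet P I ↔ IsLeast {X | CClosedUnder P I X} I ∧ ¬ CDerives P I I none :=
  Iff.rfl

lemma cDerives_union : CDerives (P ∪ Q) I X h ↔ CDerives P I X h ∨ CDerives Q I X h := by
  simp only [CDerives, Set.mem_union, or_and_right, exists_or]

lemma cDerives_iUnion {P : ι → CProgram α} :
    CDerives (⋃ i, P i) I X h ↔ ∃ i, CDerives (P i) I X h := by
  simp only [CDerives, Set.mem_iUnion, ← exists_and_right]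
  exact exists_comm

lemma cDerives_range {r : ι → CRule α} :
    CDerives (Set.range r) I X h ↔
      ∃ i, CInReduct I (r i) ∧ (r i).head = h ∧ (r i).Fires X :=
  Set.exists_range_iff

lemma cClosedUnder_union :
    CClosedUnder (P ∪ Q) I X ↔ CClosedUnder P I X ∧ CClosedUnder Q I X := by
  simp only [cClosedUnder_iff_cDerives, cDerives_union, or_imp, forall_and]

end Derivation

section Locality

variable {α : Type*} {A : Set α} {P : CProgram α} {I X : Set α} {r : CRule α} {h : Option α}

lemma CRule.atoms_subset_iff :
    r.atoms ⊆ A ↔ (∀ a, r.head = some a → a ∈ A) ∧ ↑r.pos ⊆ A ∧ ↑r.neg ⊆ A ∧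
      ∀ c ∈ r.agg, c.1 ⊆ A := by
  simp only [CRule.atoms, Set.union_subset_iff, Set.iUnion₂_subset_iff, and_assoc,
    Set.ofPred_subset]

lemma CRule.fires_inter_iff (hr : r.atoms ⊆ A) : r.Fires (X ∩ A) ↔ r.Fires X := by
  obtain ⟨-, hpos, -, hagg⟩ := CRule.atoms_subset_iff.1 hr
  refine and_congr ?_ (forall₂_congr fun c hc => satConstraint_inter_iff (hagg c hc))
  rw [Set.subset_inter_iff, and_iff_left hpos]

lemma cInReduct_inter_iff (hr : r.atoms ⊆ A) : CInReduct (I ∩ A) r ↔ CInReduct I r := by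
  obtain ⟨-, -, hneg, -⟩ := CRule.atoms_subset_iff.1 hr
  exact forall₂_congr fun a ha => not_congr (and_iff_left (hneg ha))

lemma cDerives_inter_iff (hPA : ∀ r ∈ P, r.atoms ⊆ A) :
    CDerives P (I ∩ A) (X ∩ A) h ↔ CDerives P I X h :=
  exists_congr fun _ => and_congr_right fun hr =>
    and_congr (cInReduct_inter_iff (hPA _ hr)) <|
      and_congr_right fun _ => CRule.fires_inter_iff (hPA _ hr)

lemma CDerives.mem_of_atoms_subset {a : α} (hPA : ∀ r ∈ P, r.atoms ⊆ A)
    (ha : CDerives P I X (some a)) : a ∈ A := by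
  obtain ⟨r, hr, -, hhead, -⟩ := ha
  exact (CRule.atoms_subset_iff.1 (hPA r hr)).1 a hhead

lemma cClosedUnder_inter_iff (hPA : ∀ r ∈ P, r.atoms ⊆ A) :
    CClosedUnder P (I ∩ A) (X ∩ A) ↔ CClosedUnder P I X := by
  simp only [cClosedUnder_iff_cDerives, cDerives_inter_iff hPA]
  exact forall₂_congr fun a ha => and_iff_left (ha.mem_of_atoms_subset hPA)

end Locality

section Projection

variable {α Z : Type*} {A : Set α} {P : CProgram α} {f : Z → α} {S : Z → Set α}
  {I J X Y : Set α}

/-- The rules `f z ← s` for `s ∈ S z`, which make `f z` the projection of the atoms in `S z`. -/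
def projectionRules (f : Z → α) (S : Z → Set α) : CProgram α :=
  {r | ∃ z, ∃ s ∈ S z, r = ⟨some (f z), {s}, ∅, ∅⟩}

/-- The extension of `Y` by the atoms `f z` that one application of `projectionRules f S` to `Y`
yields. An answer set `Y` of the original program corresponds to the answer set
`projectionExtension f S Y` of the rewritten one. -/
def projectionExtension (f : Z → α) (S : Z → Set α) (Y : Set α) : Set α :=
  Y ∪ f '' {z | (Y ∩ S z).Nonempty}

lemma cDerives_projectionRules_iff {h : Option α} :
    CDerives (projectionRules f S) I X h ↔ ∃ z, some (f z) = h ∧ (X ∩ S z).Nonempty := by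
  constructor
  · rintro ⟨_, ⟨z, s, hs, rfl⟩, -, hhead, hpos, -⟩
    exact ⟨z, hhead, s, by simpa using hpos, hs⟩
  · rintro ⟨z, hhead, s, hsX, hs⟩
    exact ⟨_, ⟨z, s, hs, rfl⟩, by simp [CInReduct], hhead, by simpa [CRule.Fires] using hsX⟩

lemma not_cDerives_projectionRules_none : ¬ CDerives (projectionRules f S) I X none := by
  simp [cDerives_projectionRules_iff]

lemma cClosedUnder_projectionRules_iff :
    CClosedUnder (projectionRules f S) I X ↔ ∀ z, (X ∩ S z).Nonempty → f z ∈ X := by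
  simp only [cClosedUnder_iff_cDerives, cDerives_projectionRules_iff, Option.some_inj]
  exact ⟨fun hX z hz => hX (f z) ⟨z, rfl, hz⟩, fun hX _ ⟨z, hza, hz⟩ => hza ▸ hX z hz⟩

lemma projectionExtension_mono : Monotone (projectionExtension f S) := fun _ _ hXY =>
  Set.union_subset_union hXY <|
    Set.image_mono fun _ hz => hz.mono (Set.inter_subset_inter_left _ hXY)

lemma projectionExtension_inter (hfA : ∀ z, f z ∉ A) :
    projectionExtension f S (Y ∩ A) ∩ A = Y ∩ A := by
  have hdisj : f '' {z | (Y ∩ A ∩ S z).Nonempty} ∩ A = ∅ := by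
    rw [← Set.disjoint_iff_inter_eq_empty, Set.disjoint_left]
    rintro _ ⟨z, -, rfl⟩
    exact hfA z
  rw [projectionExtension, Set.union_inter_distrib_right, hdisj, Set.union_empty,
    Set.inter_assoc, Set.inter_self]

lemma projectionExtension_inter_subset_iff (hSA : ∀ z, S z ⊆ A) :
    projectionExtension f S (X ∩ A) ⊆ X ↔ ∀ z, (X ∩ S z).Nonempty → f z ∈ X := by
  simp only [projectionExtension, Set.union_subset_iff, Set.inter_subset_left, true_and,
    Set.image_subset_iff, Set.inter_assoc, Set.inter_eq_right.2 (hSA _), Set.ofPred_subset,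
    Set.mem_preimage]

lemma cClosedUnder_union_projectionRules_iff (hPA : ∀ r ∈ P, r.atoms ⊆ A)
    (hSA : ∀ z, S z ⊆ A) :
    CClosedUnder (P ∪ projectionRules f S) I X ↔
      CClosedUnder P (I ∩ A) (X ∩ A) ∧ projectionExtension f S (X ∩ A) ⊆ X := by
  rw [cClosedUnder_union, cClosedUnder_inter_iff hPA, cClosedUnder_projectionRules_iff,
    projectionExtension_inter_subset_iff hSA]

lemma CClosedUnder.union_projectionRules (hPA : ∀ r ∈ P, r.atoms ⊆ A) (hSA : ∀ z, S z ⊆ A)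
    (hfA : ∀ z, f z ∉ A) (hY : CClosedUnder P (I ∩ A) (Y ∩ A)) :
    CClosedUnder (P ∪ projectionRules f S) I (projectionExtension f S (Y ∩ A)) := by
  rw [cClosedUnder_union_projectionRules_iff hPA hSA, projectionExtension_inter hfA]
  exact ⟨hY, subset_rfl⟩

lemma isLeast_cClosedUnder_union_projectionRules_iff (hPA : ∀ r ∈ P, r.atoms ⊆ A)
    (hSA : ∀ z, S z ⊆ A) (hfA : ∀ z, f z ∉ A) :
    IsLeast {X | CClosedUnder (P ∪ projectionRules f S) J X} J ↔
      IsLeast {X | CClosedUnder P (J ∩ A) X} (J ∩ A) ∧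
        J = projectionExtension f S (J ∩ A) := by
  have hiff {X} := cClosedUnder_union_projectionRules_iff (f := f) (I := J) (X := X) hPA hSA
  constructor
  · rintro ⟨hJ, hmin⟩
    obtain ⟨hJA, hext⟩ := hiff.1 hJ
    refine ⟨⟨hJA, fun Y hY => ?_⟩, (hmin (hJA.union_projectionRules hPA hSA hfA)).antisymm hext⟩
    have hYA : CClosedUnder P (J ∩ A) (Y ∩ A) := by
      simpa only [Set.inter_assoc, Set.inter_self] using (cClosedUnder_inter_iff hPA).2 hY
    have hJY := hmin (hYA.union_projectionRules hPA hSA hfA)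
    calc J ∩ A ⊆ projectionExtension f S (Y ∩ A) ∩ A := Set.inter_subset_inter_left A hJY
      _ = Y ∩ A := projectionExtension_inter hfA
      _ ⊆ Y := Set.inter_subset_left
  · rintro ⟨⟨hJA, hmin⟩, hJ⟩
    refine ⟨hiff.2 ⟨hJA, hJ.ge⟩, fun X hX => ?_⟩
    obtain ⟨hXA, hext⟩ := hiff.1 hX
    calc J = projectionExtension f S (J ∩ A) := hJ
      _ ⊆ projectionExtension f S (X ∩ A) := projectionExtension_mono (hmin hXA)
      _ ⊆ X := hext

theorem cIsAnswerSet_union_projectionRules_iff (hPA : ∀ r ∈ P, r.atoms ⊆ A)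
    (hSA : ∀ z, S z ⊆ A) (hfA : ∀ z, f z ∉ A) :
    CIsAnswerSet (P ∪ projectionRules f S) J ↔
      CIsAnswerSet P (J ∩ A) ∧ J = projectionExtension f S (J ∩ A) := by
  rw [cIsAnswerSet_iff_isLeast, cIsAnswerSet_iff_isLeast, cDerives_inter_iff hPA, cDerives_union,
    or_iff_left not_cDerives_projectionRules_none,
    isLeast_cClosedUnder_union_projectionRules_iff hPA hSA hfA, and_right_comm]

lemma eq_projectionExtension_inter_iff (hf : Function.Injective f) (hfA : ∀ z, f z ∉ A)
    (hJ : J ⊆ A ∪ Set.range f) :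
    J = projectionExtension f S (J ∩ A) ↔ ∀ z, (f z ∈ J ↔ (J ∩ A ∩ S z).Nonempty) := by
  have hmem (z : Z) : f z ∈ projectionExtension f S (J ∩ A) ↔ (J ∩ A ∩ S z).Nonempty := by
    simp [projectionExtension, hf.eq_iff, hfA]
  refine ⟨fun h z => (Set.ext_iff.1 h (f z)).trans (hmem z), fun h => Set.ext fun a => ?_⟩
  by_cases haA : a ∈ A
  · have hA := Set.ext_iff.1 (projectionExtension_inter (S := S) (Y := J) hfA) a
    simpa [haA] using hA.symm
  · constructor
    · intro haJ
      obtain ⟨z, rfl⟩ := (hJ haJ).resolve_left haA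
      exact (hmem z).2 ((h z).1 haJ)
    · rintro (haJ | ⟨z, hz, rfl⟩)
      · exact haJ.1
      · exact (h z).2 hz

end Projection

section AggregateProjection

variable {α Z : Type*} [DecidableEq α]

/-- The rules obtained from `r` by adding to its positive body a `b`-element subset of `S`, in all
possible ways: the family of rules that a counting aggregate replaces. -/
def CRule.subsetExpansion (r : CRule α) (S : Set α) (b : ℕ) : CProgram α :=
  {r' | ∃ T : Finset α, ↑T ⊆ S ∧ T.card = b ∧ r' = ⟨r.head, T ∪ r.pos, r.neg, r.agg⟩}

open Classical in
/-- The rule obtained from `r` by adding the cardinality constraint `(S, b)` and the positive body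
atom `x`, which is meant to be the projection of the atoms in `S`. -/
noncomputable def CRule.projectedCount (r : CRule α) (x : α) (S : Set α) (b : ℕ) : CRule α :=
  ⟨r.head, insert x r.pos, r.neg, insert (S, b) r.agg⟩

/-- The rewritten program: for each `z` the subset expansion of `r z` is replaced by a single
counting rule guarded by `f z`, and the rules defining the atoms `f z` are added. -/
def aggregateProjection (P : CProgram α) (r : Z → CRule α) (f : Z → α) (S : Z → Set α)
    (b : Z → ℕ) : CProgram α :=
  (P \ ⋃ z, (r z).subsetExpansion (S z) (b z))
    ∪ Set.range (fun z => (r z).projectedCount (f z) (S z) (b z))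
    ∪ projectionRules f S

lemma cDerives_subsetExpansion_iff {r : CRule α} {S I X : Set α} {b : ℕ} {h : Option α} :
    CDerives (r.subsetExpansion S b) I X h ↔
      CInReduct I r ∧ r.head = h ∧ r.Fires X ∧ SatConstraint X (S, b) := by
  rw [satConstraint_iff_exists_card_eq]
  constructor
  · rintro ⟨_, ⟨T, hS, hb, rfl⟩, hred, hhead, hpos, hagg⟩
    obtain ⟨hT, hpos⟩ := Set.union_subset_iff.1 (Finset.coe_union T r.pos ▸ hpos)
    exact ⟨hred, hhead, ⟨hpos, hagg⟩, T, hS, hb, hT⟩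
  · rintro ⟨hred, hhead, ⟨hpos, hagg⟩, T, hS, hb, hT⟩
    exact ⟨_, ⟨T, hS, hb, rfl⟩, hred, hhead,
      (Finset.coe_union T r.pos).trans_subset (Set.union_subset hT hpos), hagg⟩

lemma CRule.fires_projectedCount_iff {r : CRule α} {x : α} {S X : Set α} {b : ℕ} :
    (r.projectedCount x S b).Fires X ↔ x ∈ X ∧ r.Fires X ∧ SatConstraint X (S, b) := by
  simp only [CRule.Fires, CRule.projectedCount, Finset.coe_insert, Set.insert_subset_iff,
    Finset.forall_mem_insert]
  tauto

variable {P : CProgram α} {r : Z → CRule α} {f : Z → α} {S : Z → Set α} {b : Z → ℕ}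
  {I J X : Set α}

lemma cDerives_aggregateProjection_iff (hP : ∀ z, (r z).subsetExpansion (S z) (b z) ⊆ P)
    (hb : ∀ z, b z ≠ 0) (hX : ∀ z, (X ∩ S z).Nonempty → f z ∈ X) {h : Option α} :
    CDerives (aggregateProjection P r f S b) I X h ↔ CDerives (P ∪ projectionRules f S) I X h := by
  have hfamily : CDerives (Set.range fun z => (r z).projectedCount (f z) (S z) (b z)) I X h ↔
      CDerives (⋃ z, (r z).subsetExpansion (S z) (b z)) I X h := by
    simp only [cDerives_range, cDerives_iUnion, cDerives_subsetExpansion_iff,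
      CRule.fires_projectedCount_iff]
    refine exists_congr fun z => and_congr_right fun _ => and_congr_right fun _ => ?_
    exact and_iff_right_of_imp fun hfire => hX z (hfire.2.nonempty (hb z))
  conv_rhs => rw [← Set.sdiff_union_of_subset (Set.iUnion_subset hP)]
  simp only [aggregateProjection, cDerives_union, hfamily]

lemma cClosedUnder_aggregateProjection_iff (hP : ∀ z, (r z).subsetExpansion (S z) (b z) ⊆ P)
    (hb : ∀ z, b z ≠ 0) :
    CClosedUnder (aggregateProjection P r f S b) I X ↔
      CClosedUnder (P ∪ projectionRules f S) I X := by
  by_cases hX : ∀ z, (X ∩ S z).Nonempty → f z ∈ X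
  · simp only [cClosedUnder_iff_cDerives, cDerives_aggregateProjection_iff hP hb hX]
  · simp only [aggregateProjection, cClosedUnder_union, cClosedUnder_projectionRules_iff, hX,
      and_false]

theorem cIsAnswerSet_aggregateProjection_iff
    (hP : ∀ z, (r z).subsetExpansion (S z) (b z) ⊆ P) (hb : ∀ z, b z ≠ 0) :
    CIsAnswerSet (aggregateProjection P r f S b) J ↔
      CIsAnswerSet (P ∪ projectionRules f S) J := by
  simp only [cIsAnswerSet_iff_isLeast, cClosedUnder_aggregateProjection_iff hP hb]
  refine and_congr_right fun hJ => not_congr (cDerives_aggregateProjection_iff hP hb ?_)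
  exact cClosedUnder_projectionRules_iff.1 (cClosedUnder_union.1 hJ.1).2

theorem aggregate_projection_rewriting_answerSets_general {A : Set α}
    (hPA : ∀ r ∈ P, r.atoms ⊆ A) (hP : ∀ z, (r z).subsetExpansion (S z) (b z) ⊆ P)
    (hb : ∀ z, b z ≠ 0) (hSA : ∀ z, S z ⊆ A) (hf : Function.Injective f) (hfA : ∀ z, f z ∉ A)
    (hJ : J ⊆ A ∪ Set.range f) :
    CIsAnswerSet (aggregateProjection P r f S b) J ↔
      CIsAnswerSet P (J ∩ A) ∧ ∀ z, (f z ∈ J ↔ (J ∩ A ∩ S z).Nonempty) := by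
  rw [cIsAnswerSet_aggregateProjection_iff hP hb,
    cIsAnswerSet_union_projectionRules_iff hPA hSA hfA, eq_projectionExtension_inter_iff hf hfA hJ]

end AggregateProjection

/-- main rewriting theorem, ground level: projection combined
with the introduction of the counting aggregate.  Let `P` be a normal program
(a c-program with no cardinality constraints) over `A`, and suppose that for
each `z`, `P` contains exactly the family of rules with head `H z`, positive
body `T ∪ Bp z` and negated body `Bn z`, for every `b`-element subset `T` of
`S z` (`b ≥ 2`), together with further rules not of this form.  Let `f z` be
pairwise distinct fresh atoms not in `A`, and let `P''` be obtained from `P`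
by replacing, for each `z`, all rules of that family by the single c-rule with
head `H z`, positive body `Bp z ∪ {f z}`, negated body `Bn z` and cardinality
constraint `(S z, b)`, and adding the rule `f z ← s` for every `s ∈ S z`.
Then `J ⊆ A ∪ {f z : z}` is an answer set of `P''` iff `J ∩ A` is an answer
set of `P` and, for each `z`, `f z ∈ J` exactly when `(J ∩ A) ∩ S z ≠ ∅`. -/
theorem aggregate_projection_rewriting_answerSets {α Z : Type*} [DecidableEq α]
    (A : Set α) (P : CProgram α)
    (hnormal : ∀ r ∈ P, r.agg = ∅)
    (hPA : ∀ r ∈ P, r.atoms ⊆ A)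
    (b : ℕ) (hb : 2 ≤ b)
    (S : Z → Set α) (hSA : ∀ z, S z ⊆ A)
    (H : Z → Option α) (hHA : ∀ z, ∀ a : α, H z = some a → a ∈ A)
    (Bp Bn : Z → Finset α) (hBpA : ∀ z, ↑(Bp z) ⊆ A) (hBnA : ∀ z, ↑(Bn z) ⊆ A)
    (Fam : Z → CProgram α)
    (hFam : ∀ z, Fam z = {r | ∃ T : Finset α, ↑T ⊆ S z ∧ T.card = b ∧
      r = ⟨H z, T ∪ Bp z, Bn z, ∅⟩})
    (hFamP : ∀ z, Fam z ⊆ P)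
    (f : Z → α) (hfinj : Function.Injective f) (hfA : ∀ z, f z ∉ A)
    (P'' : CProgram α)
    (hP'' : P'' =
      (P \ ⋃ z, Fam z)
        ∪ Set.range (fun z =>
            (⟨H z, insert (f z) (Bp z), Bn z, {(S z, b)}⟩ : CRule α))
        ∪ {r | ∃ z, ∃ s ∈ S z, r = ⟨some (f z), {s}, ∅, ∅⟩}) :
    ∀ J ⊆ A ∪ Set.range f,
      (CIsAnswerSet P'' J ↔
        CIsAnswerSet P (J ∩ A) ∧ ∀ z, (f z ∈ J ↔ (J ∩ A ∩ S z).Nonempty)) := by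
  obtain rfl : Fam = fun z => CRule.subsetExpansion ⟨H z, Bp z, Bn z, ∅⟩ (S z) b := funext hFam
  exact fun J hJ => hP'' ▸ aggregate_projection_rewriting_answerSets_general hPA hFamP
    (fun _ => by omega) hSA hfinj hfA hJ
end
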